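/- arXiv:1403.7753 — 6 statements merged into one kernel-verified Lean document; each statement's English description precedes it below -/
import Mathlib

section
/- Let F be a number field, p a prime number, and 𝒪 an order in F. Then 𝒪 is maximal at p if and only if 𝒪 = 𝒪_F ∩ 𝒪[1/p]. -/
/-!
Choose a ℤ-basis `b` of `O`; it is a ℚ-basis of `F` and, after base change, a `ℚ_p`-basis of
`V = ℚ_p ⊗ F`. In these coordinates `O` is the set of vectors with integer coordinates, and the
`ℤ_p`-algebra `M` generated by `O` is the set of vectors with coordinates in `ℤ_p`
(`mem_adjoin_iff`). A rational number that is both `p`-integral and in `ℤ[1/p]` is an integer,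
so an `x ∈ O[1/p]` whose image lies in `M` already lies in `O` (`mem_of_norm_repr_le`).

If `M` is the integral closure of `ℤ_p`, this gives `𝒪_F ∩ O[1/p] ⊆ O` at once, since integral
elements of `F` map to integral elements of `V`.

Conversely let `y ∈ V` be integral over `ℤ_p`. As `ℚ_p = ℤ[1/p] + ℤ_p`, there is `x ∈ O[1/p]`
with `y - x ∈ M`, and then `x` is integral over `ℤ_p`. Its powers span a finitely generated
`ℤ_p`-module, so some `p ^ N` sends all of them into `M`, hence into `O`. Thus `ℤ[x]` is contained
in the finitely generated group `p ^ (-N) O`, so `x` is integral over `ℤ`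
(`isIntegral_of_mem_locAway`). If `O = 𝒪_F ∩ O[1/p]` then `x ∈ O` and `y ∈ M`.
-/

open scoped TensorProduct

/-- An order in a number field `F`: a subring that is finitely generated as a ℤ-module
and spans `F` over ℚ. -/
def IsOrder {F : Type*} [Field F] [Algebra ℚ F] (O : Subring F) : Prop :=
  O.toAddSubgroup.FG ∧ Submodule.span ℚ (O : Set F) = ⊤

/-- A ℤ[1/p]-order in `F`: a subring containing `1/p` (i.e. a ℤ[1/p]-subalgebra),
finitely generated as a ℤ[1/p]-module, and spanning `F` over ℚ.  Finite generation over
ℤ[1/p] is expressed as: there is a finite set `s ⊆ Λ` such that every `x ∈ Λ`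
satisfies `p ^ n * x ∈ span_ℤ s` for some `n`. -/
def IsOrderAway {F : Type*} [Field F] [Algebra ℚ F] (p : ℕ) (Λ : Subring F) : Prop :=
  (p : F)⁻¹ ∈ Λ ∧
  (∃ s : Finset F, (s : Set F) ⊆ Λ ∧
    ∀ x ∈ Λ, ∃ n : ℕ, (p : F) ^ n * x ∈ Submodule.span ℤ (s : Set F)) ∧
  Submodule.span ℚ (Λ : Set F) = ⊤

/-- A subring `O` of `F` is maximal at the prime `l` if the image of `O ⊗_ℤ ℤ_l`
(equivalently, the ℤ_l-subalgebra generated by the image of `O`) in `F ⊗_ℚ ℚ_l` is the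
integral closure of `ℤ_l` there. -/
def MaximalAt {F : Type*} [Field F] [Algebra ℚ F] (O : Subring F) (l : ℕ) : Prop :=
  l.Prime ∧ ∀ [Fact l.Prime],
    letI : Algebra ℤ_[l] (ℚ_[l] ⊗[ℚ] F) :=
      ((algebraMap ℚ_[l] (ℚ_[l] ⊗[ℚ] F)).comp (algebraMap ℤ_[l] ℚ_[l])).toAlgebra
    Algebra.adjoin ℤ_[l]
        ((Algebra.TensorProduct.includeRight : F →ₐ[ℚ] ℚ_[l] ⊗[ℚ] F) '' (O : Set F)) =
      integralClosure ℤ_[l] (ℚ_[l] ⊗[ℚ] F)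

/-- The localization `𝒪[1/p]` of an order: the subring generated by `𝒪` and `1/p`. -/
def locAway {F : Type*} [Field F] (p : ℕ) (O : Subring F) : Subring F :=
  O ⊔ Subring.closure {(p : F)⁻¹}

/-! ### `O[1/p]` and p-adic approximation -/

lemma mem_locAway_iff {F : Type*} [Field F] [CharZero F] {p : ℕ} (hp : p.Prime) (O : Subring F)
    (x : F) : x ∈ locAway p O ↔ ∃ n : ℕ, (p : F) ^ n * x ∈ O := by
  have hp0 : (p : F) ≠ 0 := by exact_mod_cast hp.ne_zero
  have hpO : ∀ n : ℕ, (p : F) ^ n ∈ O := fun n => pow_mem (natCast_mem O p) n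
  constructor
  · intro hx
    -- the elements that a power of `p` multiplies into `O` form a ring containing `1/p`
    let T : Subring F :=
      { carrier := {x | ∃ n : ℕ, (p : F) ^ n * x ∈ O}
        mul_mem' := by
          rintro a b ⟨m, hm⟩ ⟨n, hn⟩
          refine ⟨m + n, ?_⟩
          have := O.mul_mem hm hn
          convert this using 1
          ring
        one_mem' := ⟨0, by simp⟩
        add_mem' := by
          rintro a b ⟨m, hm⟩ ⟨n, hn⟩
          refine ⟨m + n, ?_⟩
          have := O.add_mem (O.mul_mem (hpO n) hm) (O.mul_mem (hpO m) hn)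
          convert this using 1
          ring
        zero_mem' := ⟨0, by simp⟩
        neg_mem' := by
          rintro a ⟨m, hm⟩
          exact ⟨m, by simpa using O.neg_mem hm⟩ }
    have hT : locAway p O ≤ T := by
      refine sup_le (fun y hy => ⟨0, by simpa using hy⟩) ?_
      rw [Subring.closure_le, Set.singleton_subset_iff]
      exact ⟨1, by simp [hp0, O.one_mem]⟩
    exact hT hx
  · rintro ⟨n, hn⟩
    have h1 : (p : F)⁻¹ ∈ locAway p O :=
      (le_sup_right : _ ≤ O ⊔ Subring.closure {(p : F)⁻¹}) (Subring.subset_closure rfl)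
    have h2 : (p : F) ^ n * x ∈ locAway p O :=
      (le_sup_left : O ≤ O ⊔ Subring.closure {(p : F)⁻¹}) hn
    have h3 := mul_mem (pow_mem h1 n) h2
    rwa [← mul_assoc, ← mul_pow, inv_mul_cancel₀ hp0, one_pow, one_mul] at h3

/-- `ℤ[1/p] ∩ ℤ_p = ℤ`. -/
lemma exists_int_of_norm_le {p : ℕ} [Fact p.Prime] (q : ℚ) (n : ℕ) (z : ℤ)
    (hz : (p : ℚ) ^ n * q = z) (hq : ‖(q : ℚ_[p])‖ ≤ 1) : ∃ w : ℤ, q = w := by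
  have hp0 : (p : ℚ) ≠ 0 := by exact_mod_cast (Fact.out : p.Prime).ne_zero
  have h1 : ‖((z : ℤ) : ℚ_[p])‖ ≤ (p : ℝ) ^ (-n : ℤ) := by
    have : ((z : ℤ) : ℚ_[p]) = (p : ℚ_[p]) ^ n * (q : ℚ_[p]) := by
      rw [← Rat.cast_intCast, ← hz]; push_cast; rfl
    rw [this, norm_mul, norm_pow, Padic.norm_p, zpow_neg, zpow_natCast, inv_pow]
    exact mul_le_of_le_one_right (by positivity) hq
  rw [Padic.norm_int_le_pow_iff_dvd] at h1
  obtain ⟨w, hw⟩ := h1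
  refine ⟨w, ?_⟩
  have : (p : ℚ) ^ n * q = (p : ℚ) ^ n * w := by rw [hz, hw]; push_cast; rfl
  exact mul_left_cancel₀ (pow_ne_zero _ hp0) this

lemma exists_pow_mul_norm_le {p : ℕ} [Fact p.Prime] (a : ℚ_[p]) :
    ∃ N : ℕ, ∀ n ≥ N, ‖(p : ℚ_[p]) ^ n * a‖ ≤ 1 := by
  have hp1 : (1 : ℝ) < p := by exact_mod_cast (Fact.out : p.Prime).one_lt
  obtain ⟨N, hN⟩ := pow_unbounded_of_one_lt ‖a‖ hp1
  refine ⟨N, fun n hn => ?_⟩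
  rw [norm_mul, norm_pow, Padic.norm_p, inv_pow, inv_mul_le_iff₀ (by positivity), mul_one]
  exact hN.le.trans (pow_le_pow_right₀ hp1.le hn)

/-- `ℚ_p = ℤ[1/p] + ℤ_p`. -/
lemma exists_approx {p : ℕ} [Fact p.Prime] (a : ℚ_[p]) :
    ∃ (q : ℚ) (n : ℕ), (∀ m ≥ n, ∃ z : ℤ, (p : ℚ) ^ m * q = z) ∧ ‖a - (q : ℚ_[p])‖ ≤ 1 := by
  have hp0 : (p : ℚ) ≠ 0 := by exact_mod_cast (Fact.out : p.Prime).ne_zero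
  have hp0' : (p : ℚ_[p]) ≠ 0 := by exact_mod_cast (Fact.out : p.Prime).ne_zero
  have hpR : (0 : ℝ) < p := by exact_mod_cast (Fact.out : p.Prime).pos
  obtain ⟨n, hn⟩ := exists_pow_mul_norm_le a
  let u : ℤ_[p] := ⟨(p : ℚ_[p]) ^ n * a, hn n le_rfl⟩
  have hu := (PadicInt.norm_le_pow_iff_mem_span_pow _ n).2 (PadicInt.appr_spec n u)
  refine ⟨(u.appr n : ℚ) / (p : ℚ) ^ n, n, fun m hm => ?_, ?_⟩
  · obtain ⟨k, rfl⟩ := Nat.exists_eq_add_of_le hm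
    refine ⟨p ^ k * u.appr n, ?_⟩
    push_cast
    field_simp
    ring
  · have h2 : a - (((u.appr n : ℚ) / (p : ℚ) ^ n : ℚ) : ℚ_[p])
        = ((p : ℚ_[p]) ^ n)⁻¹ * ((u - (u.appr n : ℤ_[p]) : ℤ_[p]) : ℚ_[p]) := by
      have : ((u : ℤ_[p]) : ℚ_[p]) = (p : ℚ_[p]) ^ n * a := rfl
      push_cast
      rw [this]
      field_simp
    rw [h2, norm_mul, norm_inv, norm_pow, Padic.norm_p]
    rw [zpow_neg, zpow_natCast] at hu
    rw [inv_pow, inv_inv, PadicInt.padic_norm_e_of_padicInt]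
    calc (p : ℝ) ^ n * _ ≤ (p : ℝ) ^ n * ((p : ℝ) ^ n)⁻¹ := by gcongr
      _ = 1 := mul_inv_cancel₀ (by positivity)

/-! ### The criterion in coordinates -/

section Core

variable {F ι V : Type*} [Field F] [NumberField F] {p : ℕ} [Fact p.Prime]
  [CommRing V] [Algebra ℚ_[p] V] [Algebra ℤ_[p] V] [IsScalarTower ℤ_[p] ℚ_[p] V]
  {O : Subring F} {b : Module.Basis ι ℚ F} {φ : F →+* V} {B : Module.Basis ι ℚ_[p] V}

lemma padicInt_smul_eq (a : ℤ_[p]) (v : V) : a • v = (a : ℚ_[p]) • v := by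
  rw [← algebraMap_smul ℚ_[p] a v]; rfl

lemma mem_of_norm_repr_le (hb : ∀ x, x ∈ O ↔ ∀ i, ∃ z : ℤ, b.repr x i = z)
    {x : F} (hx : x ∈ locAway p O) (h : ∀ i, ‖((b.repr x i : ℚ) : ℚ_[p])‖ ≤ 1) : x ∈ O := by
  obtain ⟨n, hn⟩ := (mem_locAway_iff Fact.out O x).1 hx
  rw [hb] at hn ⊢
  intro i
  obtain ⟨z, hz⟩ := hn i
  have : (p : F) ^ n * x = ((p : ℚ) ^ n) • x := by
    rw [Algebra.smul_def]; simp
  rw [this, map_smul, Finsupp.smul_apply, smul_eq_mul] at hz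
  exact exists_int_of_norm_le _ n z hz (h i)

variable [Fintype ι]

/-- The `ℤ_p`-algebra generated by `O` consists of the vectors with `p`-integral coordinates. -/
lemma mem_adjoin_iff (hb : ∀ x, x ∈ O ↔ ∀ i, ∃ z : ℤ, b.repr x i = z)
    (hφ : ∀ x i, B.repr (φ x) i = (b.repr x i : ℚ_[p])) (v : V) :
    v ∈ Algebra.adjoin ℤ_[p] (φ '' (O : Set F)) ↔ ∀ i, ‖B.repr v i‖ ≤ 1 := by
  constructor
  · intro hv
    rw [← Subalgebra.mem_toSubmodule, Algebra.adjoin_eq_span] at hv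
    have hc : (Submonoid.closure (φ '' (O : Set F)) : Set V) = φ '' (O : Set F) := by
      have := Submonoid.closure_eq (O.toSubmonoid.map (φ : F →* V))
      exact congrArg SetLike.coe this
    rw [hc] at hv
    induction hv using Submodule.span_induction with
    | mem x h =>
      obtain ⟨y, hy, rfl⟩ := h
      intro i
      obtain ⟨z, hz⟩ := (hb y).1 hy i
      rw [hφ, hz, Rat.cast_intCast]
      exact Padic.norm_int_le_one z
    | zero => simp
    | add x y _ _ hx hy =>
      intro i
      rw [map_add, Finsupp.add_apply]
      exact (Padic.nonarchimedean _ _).trans (max_le (hx i) (hy i))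
    | smul a x _ hx =>
      intro i
      rw [padicInt_smul_eq, map_smul, Finsupp.smul_apply, smul_eq_mul, norm_mul]
      exact mul_le_one₀ a.2 (norm_nonneg _) (hx i)
  · intro h
    rw [← B.sum_repr v]
    refine sum_mem fun i _ => ?_
    have hB : B i = φ (b i) := by
      apply B.repr.injective
      ext j
      rw [hφ, B.repr_self, b.repr_self]
      by_cases hij : i = j <;> simp [hij]
    have hbi : b i ∈ O := by
      rw [hb]
      intro j
      rw [b.repr_self]
      by_cases hij : i = j
      · exact ⟨1, by simp [hij]⟩
      · exact ⟨0, by simp [hij]⟩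
    have hBi : B i ∈ φ '' (O : Set F) := ⟨b i, hbi, hB.symm⟩
    let a : ℤ_[p] := ⟨B.repr v i, h i⟩
    have := Subalgebra.smul_mem _ (Algebra.subset_adjoin (R := ℤ_[p]) hBi) a
    rwa [padicInt_smul_eq] at this

lemma isIntegral_of_mem_locAway (hO : IsOrder O)
    (hb : ∀ x, x ∈ O ↔ ∀ i, ∃ z : ℤ, b.repr x i = z)
    (hφ : ∀ x i, B.repr (φ x) i = (b.repr x i : ℚ_[p])) {x : F} (hx : x ∈ locAway p O)
    (hint : IsIntegral ℤ_[p] (φ x)) : IsIntegral ℤ x := by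
  have hp0 : (p : F) ≠ 0 := by exact_mod_cast (Fact.out : p.Prime).ne_zero
  -- a power of `p` sends the finitely generated module `ℤ_p[φ x]` into the unit lattice
  have hbd : ∃ N : ℕ, ∀ v ∈ Algebra.adjoin ℤ_[p] {φ x}, ∀ i,
      ‖(p : ℚ_[p]) ^ N * B.repr v i‖ ≤ 1 := by
    obtain ⟨s, hs⟩ := hint.fg_adjoin_singleton
    choose N hN using fun a : ℚ_[p] => exists_pow_mul_norm_le a
    refine ⟨s.sup fun v => Finset.univ.sup fun i => N (B.repr v i), fun v hv => ?_⟩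
    rw [← Subalgebra.mem_toSubmodule, ← hs] at hv
    induction hv using Submodule.span_induction with
    | mem v h =>
      intro i
      apply hN
      exact (Finset.le_sup (f := fun i => N (B.repr v i)) (Finset.mem_univ i)).trans
        (Finset.le_sup (f := fun v => Finset.univ.sup fun i => N (B.repr v i)) h)
    | zero => simp
    | add x y _ _ hx hy =>
      intro i
      rw [map_add, Finsupp.add_apply, mul_add]
      exact (Padic.nonarchimedean _ _).trans (max_le (hx i) (hy i))
    | smul a x _ hx =>
      intro i
      rw [padicInt_smul_eq, map_smul, Finsupp.smul_apply, smul_eq_mul, mul_left_comm, norm_mul]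
      exact mul_le_one₀ a.2 (norm_nonneg _) (hx i)
  obtain ⟨N, hN⟩ := hbd
  have hpow : ∀ k : ℕ, (p : F) ^ N * x ^ k ∈ O := by
    intro k
    refine mem_of_norm_repr_le (p := p) hb ?_ fun i => ?_
    · refine mul_mem (pow_mem (natCast_mem _ p) N) (pow_mem hx k)
    · have h1 : (p : F) ^ N * x ^ k = ((p : ℚ) ^ N) • x ^ k := by
        rw [Algebra.smul_def]; simp
      have h2 := hN (φ x ^ k) (pow_mem (Algebra.self_mem_adjoin_singleton _ _) k) i
      rw [← map_pow, hφ] at h2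
      rw [h1, map_smul, Finsupp.smul_apply, smul_eq_mul]
      push_cast
      exact h2
  -- `ℤ[x]` is contained in the finitely generated group `p ^ (-N) O`
  let L : Submodule ℤ F := AddSubgroup.toIntSubmodule O.toAddSubgroup
  have hL : L.FG := (Submodule.fg_iff_addSubgroup_fg L).2 hO.1
  let L' : Submodule ℤ F := L.map (LinearMap.mulLeft ℤ ((p : F) ^ N)⁻¹)
  have hL' : L'.FG := hL.map _
  have hle : Subalgebra.toSubmodule (Algebra.adjoin ℤ {x}) ≤ L' := by
    rw [Algebra.adjoin_singleton_eq_range_aeval]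
    rintro _ ⟨f, rfl⟩
    change Polynomial.aeval x f ∈ L'
    rw [Polynomial.aeval_eq_sum_range]
    refine sum_mem fun k _ => L'.smul_mem _ ⟨(p : F) ^ N * x ^ k, hpow k, ?_⟩
    simp [hp0]
  have hfg : (Subalgebra.toSubmodule (Algebra.adjoin ℤ {x})).FG :=
    Submodule.FG.of_le hL' hle
  exact IsIntegral.of_mem_of_fg _ hfg x (Algebra.self_mem_adjoin_singleton _ _)

/-- The theorem with `ℚ_p ⊗ F` replaced by any `ℚ_p`-algebra having the given `ℤ`-basis of `O`
as a basis. -/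
lemma adjoin_eq_integralClosure_iff (hO : IsOrder O)
    (hb : ∀ x, x ∈ O ↔ ∀ i, ∃ z : ℤ, b.repr x i = z)
    (hφ : ∀ x i, B.repr (φ x) i = (b.repr x i : ℚ_[p])) :
    Algebra.adjoin ℤ_[p] (φ '' (O : Set F)) = integralClosure ℤ_[p] V ↔
      O = (integralClosure ℤ F).toSubring ⊓ locAway p O := by
  have hOint : ∀ x ∈ O, IsIntegral ℤ x := by
    intro x hx
    refine IsIntegral.of_mem_of_fg (subalgebraOfSubring O) ?_ x hx
    exact (Submodule.fg_iff_addSubgroup_fg _).2 hO.1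
  have hφint : ∀ x, IsIntegral ℤ x → IsIntegral ℤ_[p] (φ x) := fun x hx =>
    (hx.map φ.toIntAlgHom).tower_top
  have hOle : O ≤ (integralClosure ℤ F).toSubring ⊓ locAway p O :=
    le_inf hOint le_sup_left
  have hadj : Algebra.adjoin ℤ_[p] (φ '' (O : Set F)) ≤ integralClosure ℤ_[p] V := by
    refine Algebra.adjoin_le ?_
    rintro _ ⟨x, hx, rfl⟩
    exact hφint x (hOint x hx)
  constructor
  · intro h
    refine le_antisymm hOle ?_
    rintro x ⟨hx1, hx2⟩
    have h1 : φ x ∈ Algebra.adjoin ℤ_[p] (φ '' (O : Set F)) := by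
      rw [h]; exact hφint x hx1
    rw [mem_adjoin_iff hb hφ] at h1
    exact mem_of_norm_repr_le hb hx2 fun i => hφ x i ▸ h1 i
  · intro h
    refine le_antisymm hadj fun y hy => ?_
    choose q n hq hqn using fun i => exists_approx (B.repr y i)
    let x : F := ∑ i, q i • b i
    have hxr : ∀ i, b.repr x i = q i := fun i => by
      simp only [x]; rw [b.repr_sum_self]
    have hx : x ∈ locAway p O := by
      rw [mem_locAway_iff Fact.out]
      refine ⟨Finset.univ.sup n, ?_⟩
      rw [hb]
      intro i
      have h1 : (p : F) ^ (Finset.univ.sup n) * x = ((p : ℚ) ^ (Finset.univ.sup n)) • x := by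
        rw [Algebra.smul_def]; simp
      rw [h1, map_smul, Finsupp.smul_apply, smul_eq_mul, hxr]
      exact hq i _ (Finset.le_sup (Finset.mem_univ i))
    have hyx : y - φ x ∈ Algebra.adjoin ℤ_[p] (φ '' (O : Set F)) := by
      rw [mem_adjoin_iff hb hφ]
      intro i
      rw [map_sub, Finsupp.sub_apply, hφ, hxr]
      exact hqn i
    have hxint : φ x ∈ integralClosure ℤ_[p] V := by
      have := sub_mem hy (hadj hyx)
      rwa [sub_sub_cancel] at this
    have hxO : x ∈ O := by
      rw [h]
      exact ⟨isIntegral_of_mem_locAway hO hb hφ hx hxint, hx⟩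
    have := add_mem hyx (Algebra.subset_adjoin ⟨x, hxO, rfl⟩)
    rwa [sub_add_cancel] at this

end Core

/-! ### Bases of orders and the base change to `ℚ_p` -/

/-- A `ℤ`-basis of an order is a `ℚ`-basis of the field. -/
lemma exists_basis {F : Type*} [Field F] [NumberField F] {O : Subring F} (hO : IsOrder O) :
    ∃ (n : ℕ) (b : Module.Basis (Fin n) ℚ F), ∀ x, x ∈ O ↔ ∀ i, ∃ z : ℤ, b.repr x i = z := by
  let L : Submodule ℤ F := AddSubgroup.toIntSubmodule O.toAddSubgroup
  have hL : L.FG := (Submodule.fg_iff_addSubgroup_fg L).2 hO.1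
  have : Module.Finite ℤ L := Module.Finite.iff_fg.2 hL
  let c := Module.finBasis ℤ L
  have hli : LinearIndependent ℚ (fun i => (c i : F)) := by
    rw [← LinearIndependent.iff_fractionRing (R := ℤ)]
    exact c.linearIndependent.map' L.subtype L.ker_subtype
  have hspZ : Submodule.span ℤ (Set.range fun i => (c i : F)) = L := by
    have h1 := congrArg (Submodule.map L.subtype) c.span_eq
    rw [Submodule.map_span, ← Set.range_comp, Submodule.map_top, Submodule.range_subtype] at h1
    exact h1
  have hsp : ⊤ ≤ Submodule.span ℚ (Set.range fun i => (c i : F)) := by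
    rw [← hO.2, Submodule.span_le]
    intro x hx
    have hx' : x ∈ Submodule.span ℤ (Set.range fun i => (c i : F)) := by
      rw [hspZ]; exact hx
    exact Submodule.span_le_restrictScalars ℤ ℚ _ hx'
  refine ⟨_, Module.Basis.mk hli hsp, fun x => ?_⟩
  constructor
  · intro hx i
    refine ⟨c.repr ⟨x, hx⟩ i, ?_⟩
    have h1 : x = ∑ j, (c.repr ⟨x, hx⟩ j : ℚ) • (Module.Basis.mk hli hsp) j := by
      have h2 := congrArg (Subtype.val) (c.sum_repr ⟨x, hx⟩)
      rw [Submodule.coe_sum] at h2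
      refine h2.symm.trans (Finset.sum_congr rfl fun j _ => ?_)
      rw [Module.Basis.mk_apply, Submodule.coe_smul, Int.cast_smul_eq_zsmul]
    conv_lhs => rw [h1]
    rw [Module.Basis.repr_sum_self]
  · intro h
    change x ∈ L
    rw [← (Module.Basis.mk hli hsp).sum_repr x]
    refine sum_mem fun i _ => ?_
    obtain ⟨z, hz⟩ := h i
    rw [hz, Module.Basis.mk_apply, Int.cast_smul_eq_zsmul]
    exact L.smul_mem z (c i).2

/-- An order `𝒪` in a number field `F` is maximal at the prime `p` if and only if
`𝒪 = 𝒪_F ∩ 𝒪[1/p]`. -/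
theorem maximalAt_iff_eq_inter (F : Type*) [Field F] [NumberField F]
    (p : ℕ) (hp : p.Prime) (O : Subring F) (hO : IsOrder O) :
    MaximalAt O p ↔ O = (integralClosure ℤ F).toSubring ⊓ locAway p O := by
  have hfact : Fact p.Prime := ⟨hp⟩
  obtain ⟨n, b, hb⟩ := exists_basis hO
  let alg : Algebra ℤ_[p] (ℚ_[p] ⊗[ℚ] F) :=
    ((algebraMap ℚ_[p] (ℚ_[p] ⊗[ℚ] F)).comp (algebraMap ℤ_[p] ℚ_[p])).toAlgebra
  -- the scalar action has to be the one of `alg`, not the one of the tensor product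
  have : @IsScalarTower ℤ_[p] ℚ_[p] (ℚ_[p] ⊗[ℚ] F) _ _ alg.toSMul :=
    IsScalarTower.of_algebraMap_eq' rfl
  have key := adjoin_eq_integralClosure_iff (p := p) (V := ℚ_[p] ⊗[ℚ] F) (b := b)
    (φ := ((Algebra.TensorProduct.includeRight : F →ₐ[ℚ] ℚ_[p] ⊗[ℚ] F) : F →+* _))
    (B := Algebra.TensorProduct.basis ℚ_[p] b) hO hb (fun x i => by
      simp [Algebra.TensorProduct.basis_repr_tmul])
  rw [← key]
  exact ⟨fun h => h.2, fun h => ⟨hp, fun {_} => h⟩⟩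
end

section
/- Let d be a prime number and let D be a division algebra over ℚ of dimension d² (with center ℚ). If A is a ℚ-subalgebra of D containing 1, then the ℚ-dimension of A is 1, d, or d²; if dim A = 1 then A = ℚ·1, if dim A = d² then A = D, and if dim A = d then A is a field (i.e., A is commutative and every nonzero element of A is invertible in A). -/
/-!
A finite-dimensional domain `E` over a field is a division algebra, and so is each subalgebra `B`
of it; hence `E` is a free `B`-module and the tower formula gives `dim B ∣ dim E`
(`finrank_subalgebra_dvd`). For `E = D` this leaves only the dimensions `1`, `d` and `d²`.
When `dim A = d` is prime, the same divisibility applied inside `A` shows that the commutative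
subalgebra generated by any non-scalar element is all of `A`, so `A` is commutative
(`commute_of_finrank_prime`). Invertibility of nonzero elements of `A` is again the fact that a
finite-dimensional domain is a division algebra.
-/

theorem isUnit_of_finite_domain {K E : Type*} [Field K] [Ring E] [IsDomain E] [Algebra K E]
    [FiniteDimensional K E] {x : E} (hx : x ≠ 0) : IsUnit x :=
  letI := divisionRingOfFiniteDimensional K E
  (isUnit_iff_ne_zero (a := x)).2 hx

theorem finrank_subalgebra_dvd {K E : Type*} [Field K] [Ring E] [IsDomain E] [Algebra K E]
    [FiniteDimensional K E] (B : Subalgebra K E) :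
    Module.finrank K B ∣ Module.finrank K E := by
  let : DivisionRing B := divisionRingOfFiniteDimensional K B
  exact ⟨_, (Module.finrank_mul_finrank K B E).symm⟩

/-- A finite-dimensional domain of prime dimension is commutative: it is generated by any
non-scalar element. -/
theorem commute_of_finrank_prime {K E : Type*} [Field K] [Ring E] [IsDomain E] [Algebra K E]
    [FiniteDimensional K E] (hp : (Module.finrank K E).Prime) (x y : E) : x * y = y * x := by
  rcases (Nat.dvd_prime hp).1 (finrank_subalgebra_dvd (Algebra.adjoin K {x})) with h | h
  · -- `x` generates only the scalars, so it is central
    have hx : x ∈ (⊥ : Subalgebra K E) :=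
      Subalgebra.eq_bot_of_finrank_one h ▸ Algebra.self_mem_adjoin_singleton K x
    obtain ⟨r, rfl⟩ := Algebra.mem_bot.1 hx
    exact Algebra.commutes r y
  · -- `x` generates everything, so `y` is a polynomial in `x`
    have htop : Algebra.adjoin K {x} = ⊤ := by
      apply Subalgebra.toSubmodule_injective
      exact Submodule.eq_top_of_finrank_eq h
    have hy : y ∈ Algebra.adjoin K {x} := htop ▸ Algebra.mem_top
    exact Algebra.commute_of_mem_adjoin_self hy

/-- Let `D` be a division algebra over ℚ with center ℚ, of dimension `d²` with `d` prime.
Every ℚ-subalgebra `A` of `D` has dimension `1`, `d` or `d²`; in the first case `A = ℚ·1`,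
in the last `A = D`, and in the middle case `A` is a (commutative) field. -/
theorem subalgebra_of_division_algebra (d : ℕ) (hd : d.Prime)
    (D : Type*) [DivisionRing D] [Algebra ℚ D]
    (hcentral : Subalgebra.center ℚ D = ⊥)
    (hdim : Module.finrank ℚ D = d ^ 2)
    (A : Subalgebra ℚ D) :
    (Module.finrank ℚ A = 1 ∨ Module.finrank ℚ A = d ∨ Module.finrank ℚ A = d ^ 2) ∧
    (Module.finrank ℚ A = 1 → A = ⊥) ∧
    (Module.finrank ℚ A = d ^ 2 → A = ⊤) ∧
    (Module.finrank ℚ A = d →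
      (∀ x y : ↥A, x * y = y * x) ∧ (∀ x : ↥A, x ≠ 0 → IsUnit x)) := by
  have hfin : FiniteDimensional ℚ D :=
    Module.finite_of_finrank_pos (hdim ▸ pow_pos hd.pos 2)
  refine ⟨?_, fun h => Subalgebra.eq_bot_of_finrank_one h, fun h => ?_, fun h => ⟨?_, fun x hx => ?_⟩⟩
  · obtain ⟨k, hk, h⟩ := (Nat.dvd_prime_pow hd).1 (hdim ▸ finrank_subalgebra_dvd A)
    interval_cases k <;> simp [h]
  · apply Subalgebra.toSubmodule_injective
    exact Submodule.eq_top_of_finrank_eq (h.trans hdim.symm)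
  · exact commute_of_finrank_prime (K := ℚ) (h ▸ hd)
  · exact isUnit_of_finite_domain (K := ℚ) hx
end

section
/- Let D be a finite-dimensional division algebra over ℚ, let l be a prime number such that D ⊗_ℚ ℚ_l is a division algebra, and let F be a number field admitting a ℚ-algebra embedding F → D. Then l is non-decomposed in F, i.e., exactly one prime ideal of the ring of integers 𝒪_F lies above l (equivalently, F ⊗_ℚ ℚ_l is a field). -/
/-!
Write `K = ℚ_l`. By flatness `K ⊗ F` embeds into `K ⊗ D`, which has no zero divisors, so
`L = K ⊗ F` is a domain, finite over `K`, hence a field. As `K` is complete, its absolute value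
extends to `L` by the spectral norm, which is multiplicative and nonarchimedean, and satisfies
`‖N_{L/K} a‖ = ‖a‖ ^ [L : K]` because conjugate elements have the same spectral norm
(`norm_algebraNorm_eq_spectralNorm_pow`). Consequently two elements of `L` whose norms to `K` have
absolute value `< 1` cannot add up to `1` (`add_ne_one_of_norm_lt_one`).

If `P ≠ Q` were primes of `𝓞 F` above `l`, they would be coprime, giving `x ∈ P`, `y ∈ Q` with
`x + y = 1`. But `l` divides the integers `N x` and `N y`, and norms are compatible with base
change, so this contradicts the previous statement for `1 ⊗ x` and `1 ⊗ y`. Existence of a prime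
above `l` holds because `l` is not a unit: its norm is `l ^ [F : ℚ]`.
-/

open scoped TensorProduct NumberField

theorem norm_algebraNorm_eq_spectralNorm_pow {K L : Type*} [NontriviallyNormedField K]
    [IsUltrametricDist K] [CompleteSpace K] [Field L] [Algebra K L] [FiniteDimensional K L]
    [Algebra.IsSeparable K L] (a : L) :
    ‖Algebra.norm K a‖ = spectralNorm K L a ^ Module.finrank K L := by
  have h := congrArg (spectralMulAlgNorm K (AlgebraicClosure K))
    (Algebra.norm_eq_prod_embeddings K (AlgebraicClosure K) a)
  rw [map_prod, spectralMulAlgNorm_def, spectralNorm_extends] at h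
  -- Each conjugate `σ a` has the same minimal polynomial as `a`, hence the same spectral norm.
  have hσ : ∀ σ : L →ₐ[K] AlgebraicClosure K,
      spectralMulAlgNorm K (AlgebraicClosure K) (σ a) = spectralNorm K L a := fun σ => by
    rw [spectralMulAlgNorm_def, spectralNorm, spectralNorm,
      minpoly.algHom_eq σ σ.toRingHom.injective]
  rw [h, Finset.prod_congr rfl fun σ _ => hσ σ, Finset.prod_const, Finset.card_univ,
    AlgHom.card]

/-- In a finite separable extension of a complete nonarchimedean field, the elements whose norm has
absolute value `< 1` are those of spectral norm `< 1`, and these are closed under addition. -/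
theorem add_ne_one_of_norm_lt_one {K L : Type*} [NontriviallyNormedField K]
    [IsUltrametricDist K] [CompleteSpace K] [Field L] [Algebra K L] [FiniteDimensional K L]
    [Algebra.IsSeparable K L] {a b : L} (ha : ‖Algebra.norm K a‖ < 1)
    (hb : ‖Algebra.norm K b‖ < 1) : a + b ≠ 1 := by
  intro hab
  rw [norm_algebraNorm_eq_spectralNorm_pow,
    pow_lt_one_iff_of_nonneg (spectralNorm_nonneg _) Module.finrank_pos.ne'] at ha hb
  have h := isNonarchimedean_spectralNorm (K := K) (L := L) a b
  rw [hab, spectralNorm_one] at h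
  exact absurd h (not_le.mpr (max_lt ha hb))

theorem algebraNorm_one_tmul {R A B : Type*} [CommRing R] [CommRing A] [CommRing B]
    [Algebra R A] [Algebra R B] [Module.Free R B] [Module.Finite R B] (x : B) :
    Algebra.norm A ((1 : A) ⊗ₜ[R] x) = algebraMap R A (Algebra.norm R x) := by
  rw [Algebra.norm_apply, Algebra.norm_apply, ← LinearMap.det_baseChange,
    ← Algebra.baseChange_lmul]

theorem natCast_dvd_algebraNorm_of_mem {F : Type*} [Field F] [NumberField F] {l : ℕ}
    (hl : l.Prime) {P : Ideal (𝓞 F)} (hP : P ≠ ⊤) (hlP : (l : 𝓞 F) ∈ P) {x : 𝓞 F} (hx : x ∈ P) :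
    (l : ℤ) ∣ Algebra.norm ℤ x := by
  refine dvd_trans (Int.natCast_dvd_natCast.mpr ?_) (Ideal.absNorm_dvd_norm_of_mem hx)
  -- Otherwise `P` contains the coprime integers `l` and `absNorm P`.
  by_contra hnd
  have hco : IsCoprime (l : 𝓞 F) (Ideal.absNorm P : 𝓞 F) :=
    ((hl.coprime_iff_not_dvd).mpr hnd).cast
  obtain ⟨u, v, huv⟩ := hco
  exact hP ((Ideal.eq_top_iff_one P).mpr (huv ▸ P.add_mem (P.mul_mem_left u hlP)
    (P.mul_mem_left v (Ideal.absNorm_mem P))))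

theorem exists_isMaximal_natCast_mem {F : Type*} [Field F] [NumberField F] {l : ℕ}
    (hl : l.Prime) : ∃ P : Ideal (𝓞 F), P.IsMaximal ∧ (l : 𝓞 F) ∈ P := by
  have hnu : ¬ IsUnit (l : 𝓞 F) := fun hu => by
    have h := hu.map (Algebra.norm ℤ)
    have e : (l : 𝓞 F) = algebraMap ℤ (𝓞 F) (l : ℤ) := by simp
    rw [e, Algebra.norm_algebraMap, isUnit_pow_iff Module.finrank_pos.ne'] at h
    exact (Nat.prime_iff_prime_int.mp hl).not_isUnit h
  obtain ⟨P, hP, hle⟩ := exists_max_ideal_of_mem_nonunits hnu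
  exact ⟨P, hP, hle⟩

theorem isField_padic_tensor {D : Type*} [DivisionRing D] [Algebra ℚ D]
    {l : ℕ} [Fact l.Prime] (hDl : ∀ x : ℚ_[l] ⊗[ℚ] D, x ≠ 0 → IsUnit x)
    {F : Type*} [Field F] [NumberField F] (φ : F →ₐ[ℚ] D) : IsField (ℚ_[l] ⊗[ℚ] F) := by
  let ψ : ℚ_[l] ⊗[ℚ] F →ₐ[ℚ_[l]] ℚ_[l] ⊗[ℚ] D :=
    Algebra.TensorProduct.map (AlgHom.id ℚ_[l] ℚ_[l]) φ
  have hψ : Function.Injective ψ :=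
    Module.Flat.lTensor_preserves_injective_linearMap (M := ℚ_[l]) φ.toLinearMap
      φ.toRingHom.injective
  have : NoZeroDivisors (ℚ_[l] ⊗[ℚ] F) := ⟨fun {a b} hab => by
    by_contra! hne
    have h0 : ψ a * ψ b = 0 := by rw [← map_mul, hab, map_zero]
    have ha : IsUnit (ψ a) := hDl _ ((map_ne_zero_iff ψ hψ).mpr hne.1)
    exact (map_ne_zero_iff ψ hψ).mpr hne.2 (ha.mul_right_eq_zero.mp h0)⟩
  have : IsDomain (ℚ_[l] ⊗[ℚ] F) := NoZeroDivisors.to_isDomain _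
  exact isField_of_isIntegral_of_isField' (Field.toIsField ℚ_[l])

theorem eq_of_isField_padic_tensor {l : ℕ} [Fact l.Prime] {F : Type*} [Field F] [NumberField F]
    (hL : IsField (ℚ_[l] ⊗[ℚ] F)) {P Q : Ideal (𝓞 F)} (hP : P.IsMaximal) (hQ : Q.IsMaximal)
    (hlP : (l : 𝓞 F) ∈ P) (hlQ : (l : 𝓞 F) ∈ Q) : P = Q := by
  by_contra hne
  have hl : l.Prime := Fact.out
  obtain ⟨x, hx, y, hy, hxy⟩ :=
    Ideal.isCoprime_iff_exists.mp (Ideal.isCoprime_of_isMaximal hne)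
  have key : ∀ (R : Ideal (𝓞 F)), R.IsMaximal → (l : 𝓞 F) ∈ R → ∀ z ∈ R,
      ‖Algebra.norm ℚ_[l] ((1 : ℚ_[l]) ⊗ₜ[ℚ] (z : F))‖ < 1 := fun R hR hlR z hz => by
    rw [algebraNorm_one_tmul, ← Algebra.coe_norm_int, map_intCast,
      Padic.norm_intCast_lt_one_iff]
    exact natCast_dvd_algebraNorm_of_mem hl hR.ne_top hlR hz
  let := hL.toField
  refine add_ne_one_of_norm_lt_one (key P hP hlP x hx) (key Q hQ hlQ y hy) ?_
  rw [← TensorProduct.tmul_add, ← map_add, hxy, map_one]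
  rfl

/-- If `D` is a finite-dimensional division algebra over ℚ, `l` a prime such that
`D ⊗_ℚ ℚ_l` is a division algebra, and `F` a number field embedding into `D`, then `l` is
non-decomposed in `F`: exactly one nonzero prime ideal of the ring of integers of `F`
lies above `l`. -/
theorem nondecomposed_of_embedding (D : Type*) [DivisionRing D] [Algebra ℚ D]
    [FiniteDimensional ℚ D]
    (l : ℕ) [Fact l.Prime]
    (hDl : ∀ x : ℚ_[l] ⊗[ℚ] D, x ≠ 0 → IsUnit x)
    (F : Type*) [Field F] [NumberField F]
    (hemb : Nonempty (F →ₐ[ℚ] D)) :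
    ∃! P : Ideal (integralClosure ℤ F), P.IsPrime ∧ P ≠ ⊥ ∧
      (l : ↥(integralClosure ℤ F)) ∈ P := by
  obtain ⟨φ⟩ := hemb
  have hl : l.Prime := Fact.out
  have hL := isField_padic_tensor hDl φ
  suffices h : ∃! P : Ideal (𝓞 F), P.IsPrime ∧ P ≠ ⊥ ∧ (l : 𝓞 F) ∈ P from h
  obtain ⟨P, hP, hlP⟩ := exists_isMaximal_natCast_mem (F := F) hl
  refine ⟨P, ⟨hP.isPrime, ?_, hlP⟩, fun Q ⟨hQ, hQ0, hlQ⟩ =>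
    eq_of_isField_padic_tensor hL (hQ.isMaximal hQ0) hP hlQ hlP⟩
  rintro rfl
  exact hl.ne_zero (by simpa using hlP)
end

section
/- Let D be a quaternion division algebra over ℚ (a central division algebra of ℚ-dimension 4). Suppose there exist prime numbers l ≡ 1 (mod 3) and m ≡ 1 (mod 4) such that D ⊗_ℚ ℚ_l and D ⊗_ℚ ℚ_m are division algebras. Then the only elements of finite order in the multiplicative group D^× of nonzero elements of D are 1 and −1. -/
/-!
If `x` has finite order `n ∤ 2`, then `n` is divisible by `3`, by `4` or by a prime `p ≥ 5`, and
a power of `x` has exactly that order. Each case is impossible.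

* An element `y` of prime order `p` has minimal polynomial the cyclotomic polynomial of degree
  `p - 1` over `ℚ`. For `p ≥ 5` the powers of `y` then span the four-dimensional `D`, so `y` is
  central, i.e. rational, contradicting its degree (`orderOf_prime_lt_five`).
* An element of order `3` satisfies `y² + y + 1 = 0`, and one of order `4` satisfies `y² + 1 = 0`.
  By Hensel's lemma the first polynomial has a root in `ℚ_l` and the second in `ℚ_m`
  (`exists_padic_root`). Over the division ring `ℚ_p ⊗ D` the polynomial splits with central
  roots, so `1 ⊗ y` is one of these roots; hence `y` is central in `D`, i.e. rational, which is
  absurd since the polynomials have no rational root (`quadratic_ne_zero`).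
-/

open scoped TensorProduct

/-- Hensel's lemma for `X² + bX + 1`: a simple root modulo `p` lifts to `ℚ_p`. -/
theorem exists_padic_root (p : ℕ) [Fact p.Prime] (b : ℤ) (a : ZMod p)
    (h : a ^ 2 + b * a + 1 = 0) (h' : 2 * a + b ≠ 0) :
    ∃ w : ℚ_[p], w ^ 2 + b * w + 1 = 0 := by
  obtain ⟨a₀, rfl⟩ := ZMod.ringHom_surjective (PadicInt.toZMod (p := p)) a
  obtain ⟨w, hw, -⟩ := HenselianRing.is_henselian
    (I := IsLocalRing.maximalIdeal ℤ_[p])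
    (Polynomial.X ^ 2 + Polynomial.C (b : ℤ_[p]) * Polynomial.X + 1) (by monicity!) a₀
    (by
      rw [← PadicInt.ker_toZMod, RingHom.mem_ker]
      simpa using h)
    (by
      refine IsUnit.map (Ideal.Quotient.mk _) ?_
      rw [← IsLocalRing.notMem_maximalIdeal, ← PadicInt.ker_toZMod, RingHom.mem_ker]
      have h2 : PadicInt.toZMod (2 : ℤ_[p]) = 2 := map_ofNat _ 2
      simpa [Polynomial.derivative_X_pow, one_add_one_eq_two, h2] using h')
  refine ⟨w, ?_⟩
  have hroot : w ^ 2 + b * w + 1 = 0 := by simpa [Polynomial.IsRoot] using hw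
  exact_mod_cast congrArg (fun z : ℤ_[p] => (z : ℚ_[p])) hroot

/-- If a quadratic `X² + bX + 1` without rational roots acquires a root in a field `K` for which
`K ⊗ D` is still a division ring, then it has no root in `D`. -/
theorem quadratic_ne_zero {D K : Type*} [DivisionRing D] [Algebra ℚ D] [Field K] [Algebra ℚ K]
    (hcentral : Subalgebra.center ℚ D = ⊥)
    (hD : ∀ x : K ⊗[ℚ] D, x ≠ 0 → IsUnit x) (b : ℤ)
    (hb : ∀ q : ℚ, q ^ 2 + b * q + 1 ≠ 0) (w : K) (hw : w ^ 2 + b * w + 1 = 0) (y : D) :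
    y ^ 2 + b * y + 1 ≠ 0 := by
  intro hy
  let ι : D →ₐ[ℚ] K ⊗[ℚ] D := Algebra.TensorProduct.includeRight
  have hι : Function.Injective ι :=
    Algebra.TensorProduct.includeRight_injective (algebraMap ℚ K).injective
  have key : ∃ k : K, ι y = algebraMap K (K ⊗[ℚ] D) k := by
    have e1 : (ι y) ^ 2 + b * ι y + 1 = 0 := by simpa using congrArg ι hy
    have e2 : (algebraMap K (K ⊗[ℚ] D) w) ^ 2 + b * algebraMap K (K ⊗[ℚ] D) w + 1 = 0 := by
      simpa only [map_add, map_mul, map_pow, map_intCast, map_one, map_zero] using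
        congrArg (algebraMap K (K ⊗[ℚ] D)) hw
    have hc : algebraMap K (K ⊗[ℚ] D) w * ι y = ι y * algebraMap K (K ⊗[ℚ] D) w :=
      Algebra.commutes _ _
    have hcb : ι y * (b : K ⊗[ℚ] D) = b * ι y := (Int.cast_commute b _).symm.eq
    have hcw : algebraMap K (K ⊗[ℚ] D) w * (b : K ⊗[ℚ] D) = b * algebraMap K (K ⊗[ℚ] D) w :=
      (Int.cast_commute b _).symm.eq
    have hprod : (ι y - algebraMap K (K ⊗[ℚ] D) w) *
        (ι y + b + algebraMap K (K ⊗[ℚ] D) w) = 0 := by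
      rw [← sub_self (0 : K ⊗[ℚ] D)]
      nth_rewrite 1 [← e1]
      rw [← e2]
      simp only [sub_mul, mul_add, hc, hcb, hcw, pow_two]
      abel
    by_cases h0 : ι y - algebraMap K (K ⊗[ℚ] D) w = 0
    · exact ⟨w, sub_eq_zero.mp h0⟩
    · have := (hD _ h0).mul_right_eq_zero.mp hprod
      refine ⟨-b - w, ?_⟩
      rw [map_sub, map_neg, map_intCast, ← sub_eq_zero, ← this]
      abel
  obtain ⟨k, hk⟩ := key
  have hyc : y ∈ Subalgebra.center ℚ D := by
    rw [Subalgebra.mem_center_iff]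
    intro d
    apply hι
    rw [map_mul, map_mul, hk]
    exact (Algebra.commutes _ _).symm
  rw [hcentral, Algebra.mem_bot] at hyc
  obtain ⟨q, rfl⟩ := hyc
  refine hb q ((algebraMap ℚ D).injective ?_)
  simpa only [map_add, map_mul, map_pow, map_intCast, map_one, map_zero] using hy

/-- An element of prime order `p` generates a commutative subalgebra of dimension `p - 1`, so
`p ≥ 5` would force it to be all of `D`, and `y` to be central. -/
theorem orderOf_prime_lt_five {D : Type*} [DivisionRing D] [Algebra ℚ D]
    (hcentral : Subalgebra.center ℚ D = ⊥) (hdim : Module.finrank ℚ D = 4)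
    (p : ℕ) (hp : p.Prime) (y : D) (hy : orderOf y = p) : p < 5 := by
  by_contra! h5
  have : Fact p.Prime := ⟨hp⟩
  have : FiniteDimensional ℚ D := Module.finite_of_finrank_pos (by omega)
  have hy1 : y - 1 ≠ 0 := by
    rw [sub_ne_zero]
    rintro rfl
    rw [orderOf_one] at hy
    omega
  have hsum : ∑ i ∈ Finset.range p, y ^ i = 0 := by
    have h := geom_sum_mul y p
    rw [← hy, pow_orderOf_eq_one, sub_self, hy] at h
    exact (mul_eq_zero.mp h).resolve_right hy1
  have hmin : Polynomial.cyclotomic p ℚ = minpoly ℚ y :=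
    minpoly.eq_of_irreducible_of_monic (Polynomial.cyclotomic.irreducible_rat hp.pos)
      (by simpa [Polynomial.cyclotomic_prime] using hsum) (Polynomial.cyclotomic.monic p ℚ)
  have hdeg : (minpoly ℚ y).natDegree = p - 1 := by
    rw [← hmin, Polynomial.natDegree_cyclotomic, Nat.totient_prime hp]
  have hli := linearIndependent_pow (K := ℚ) y
  have hle := hli.fintype_card_le_finrank
  rw [Fintype.card_fin, hdim] at hle
  have hspan := hli.span_eq_top_of_card_eq_finrank' (by rw [Fintype.card_fin]; omega)
  -- the powers of `y` span `D`, so `y` is central, i.e. rational, contrary to its degree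
  have hyc : y ∈ Subalgebra.center ℚ D := by
    rw [Subalgebra.mem_center_iff]
    intro d
    have hd : d ∈ Submodule.span ℚ (Set.range fun i : Fin (minpoly ℚ y).natDegree => y ^ (i : ℕ)) :=
      hspan ▸ Submodule.mem_top
    induction hd using Submodule.span_induction with
    | mem z hz =>
      obtain ⟨i, rfl⟩ := hz
      exact ((Commute.refl y).pow_left _).eq
    | zero => simp
    | add u v _ _ hu hv => rw [add_mul, mul_add, hu, hv]
    | smul q u _ hu => rw [smul_mul_assoc, mul_smul_comm, hu]
  rw [hcentral, Algebra.mem_bot] at hyc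
  obtain ⟨q, rfl⟩ := hyc
  rw [minpoly.eq_X_sub_C, Polynomial.natDegree_X_sub_C] at hdeg
  omega

/-- Let `D` be a quaternion division algebra over ℚ (center ℚ, dimension 4), and suppose
there are primes `l ≡ 1 (mod 3)` and `m ≡ 1 (mod 4)` such that `D ⊗_ℚ ℚ_l` and
`D ⊗_ℚ ℚ_m` are division algebras.  Then the only elements of finite order in `D^×`
are `1` and `-1`. -/
theorem torsion_units_of_quaternion_algebra
    (D : Type*) [DivisionRing D] [Algebra ℚ D]
    (hcentral : Subalgebra.center ℚ D = ⊥)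
    (hdim : Module.finrank ℚ D = 4)
    (l m : ℕ) [Fact l.Prime] [Fact m.Prime]
    (hl3 : l % 3 = 1) (hm4 : m % 4 = 1)
    (hDl : ∀ x : ℚ_[l] ⊗[ℚ] D, x ≠ 0 → IsUnit x)
    (hDm : ∀ x : ℚ_[m] ⊗[ℚ] D, x ≠ 0 → IsUnit x) :
    ∀ x : Dˣ, IsOfFinOrder x → x = 1 ∨ x = -1 := by
  have no3 : ∀ y : D, y ^ 2 + (1 : ℤ) * y + 1 ≠ 0 := by
    have h3 : Fact (Nat.Prime 3) := ⟨Nat.prime_three⟩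
    obtain ⟨u, hu⟩ := exists_prime_orderOf_dvd_card (G := (ZMod l)ˣ) 3 (by
      rw [ZMod.card_units]
      omega)
    set a : ZMod l := Units.val u with ha
    have ha3 : a ^ 3 = 1 := by
      rw [ha, ← Units.val_pow_eq_pow_val, ← hu, pow_orderOf_eq_one, Units.val_one]
    have ha1 : a - 1 ≠ 0 := by
      rw [sub_ne_zero, ha, Ne, Units.val_eq_one]
      rintro rfl
      simp at hu
    have hq : a ^ 2 + (1 : ℤ) * a + 1 = 0 := by
      apply (mul_eq_zero.mp (_ : (a - 1) * _ = 0)).resolve_left ha1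
      push_cast
      linear_combination ha3
    have hl : (3 : ZMod l) ≠ 0 := by
      intro h
      have h' : ((3 : ℕ) : ZMod l) = 0 := by exact_mod_cast h
      rw [ZMod.natCast_eq_zero_iff, Nat.prime_dvd_prime_iff_eq Fact.out h3.out] at h'
      omega
    obtain ⟨w, hw⟩ := exists_padic_root l 1 a hq (by
      -- the discriminant of `X² + X + 1` is `-3`
      intro h
      push_cast at h hq
      exact hl (by linear_combination 4 * hq - (2 * a + 1) * h))
    exact quadratic_ne_zero hcentral hDl 1
      (fun q => by push_cast; nlinarith [sq_nonneg (2 * q + 1)]) w hw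
  have no4 : ∀ y : D, y ^ 2 + (0 : ℤ) * y + 1 ≠ 0 := by
    obtain ⟨a, ha⟩ := (ZMod.exists_sq_eq_neg_one_iff (p := m)).mpr (by omega)
    have hm : (2 : ZMod m) ≠ 0 := by
      intro h
      have h' : ((2 : ℕ) : ZMod m) = 0 := by exact_mod_cast h
      rw [ZMod.natCast_eq_zero_iff, Nat.prime_dvd_prime_iff_eq Fact.out Nat.prime_two] at h'
      omega
    have ha0 : a ≠ 0 := by
      rintro rfl
      simp at ha
    obtain ⟨w, hw⟩ := exists_padic_root m 0 a (by push_cast; linear_combination -ha)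
      (by simpa using ⟨hm, ha0⟩)
    exact quadratic_ne_zero hcentral hDm 0
      (fun q => by push_cast; nlinarith [sq_nonneg q]) w hw
  intro x hx
  have hpos := hx.orderOf_pos
  have hpow : ∀ k, k ∣ orderOf x → ∃ y : D, orderOf y = k := by
    intro k hk
    obtain ⟨c, hc⟩ := hk
    refine ⟨((x ^ c : Dˣ) : D), ?_⟩
    have hc0 : c ≠ 0 := by
      rintro rfl
      omega
    rw [orderOf_units, orderOf_pow_of_dvd hc0 ⟨k, by rw [hc, mul_comm]⟩, hc,
      Nat.mul_div_cancel _ (Nat.pos_of_ne_zero hc0)]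
  have h3 : ¬ 3 ∣ orderOf x := by
    intro h
    obtain ⟨y, hy⟩ := hpow 3 h
    have hy3 : y ^ 3 = 1 := by rw [← hy, pow_orderOf_eq_one]
    have hy1 : y - 1 ≠ 0 := by
      rw [sub_ne_zero]
      rintro rfl
      simp at hy
    have hs := geom_sum_mul y 3
    rw [hy3, sub_self] at hs
    refine no3 y ?_
    rw [← (mul_eq_zero.mp hs).resolve_right hy1]
    simp [Finset.sum_range_succ]
    abel
  have h4 : ¬ 4 ∣ orderOf x := by
    intro h
    obtain ⟨y, hy⟩ := hpow 4 h
    have hy4 : (y ^ 2) ^ 2 = 1 := by rw [← pow_mul, ← pow_orderOf_eq_one y, hy]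
    rcases sq_eq_one_iff.mp hy4 with h2 | h2
    · have := orderOf_dvd_of_pow_eq_one h2
      rw [hy] at this
      omega
    · exact no4 y (by simp [h2])
  -- no odd prime divides the order: it would be `3` or at least `5`
  have h2 : orderOf x ∣ 2 := by
    rcases Nat.eq_two_pow_or_exists_odd_prime_and_dvd (orderOf x) with ⟨k, hk⟩ | ⟨p, hp, hpx, hodd⟩
    · rw [hk] at h4 ⊢
      have hk2 : k < 2 := by
        by_contra! hk2
        exact h4 (pow_dvd_pow 2 hk2)
      exact pow_dvd_pow 2 (Nat.le_of_lt_succ hk2)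
    · obtain ⟨y, hy⟩ := hpow p hpx
      have h5 := orderOf_prime_lt_five hcentral hdim p hp y hy
      have hp2 := hp.two_le
      obtain ⟨k, hk⟩ := hodd
      obtain rfl : p = 3 := by omega
      exact absurd hpx h3
  have hx2 : (x : D) ^ 2 = 1 := by
    rw [← Units.val_pow_eq_pow_val, orderOf_dvd_iff_pow_eq_one.mp h2, Units.val_one]
  rcases sq_eq_one_iff.mp hx2 with h | h
  · exact Or.inl (Units.ext h)
  · exact Or.inr (Units.ext (by simpa using h))
end

section
/- In a free group, no nontrivial element is conjugate to its inverse: if G is a free group (on any set of generators), g ∈ G, and there exists x ∈ G with x·g·x⁻¹ = g⁻¹, then g = 1. -/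
/-!
Let `x * g * x⁻¹ = g⁻¹` in a free group and let `H` be the subgroup generated by `x` and `g`.
By the Nielsen–Schreier theorem `H` is free. Every homomorphism from `H` to a torsion-free abelian
group kills `g`, so its image is cyclic, generated by the image of `x`. If `H` had two distinct
free generators, it would map onto `ℤ × ℤ`, which is not cyclic; hence `H` has rank at most one and
is commutative. Then `g = x * g * x⁻¹ = g⁻¹`, and `g = 1` because free groups are torsion-free.
-/

theorem freeGroup_commute_of_subsingleton {ι : Type*} [Subsingleton ι] (u v : FreeGroup ι) :
    Commute u v := by
  have key : ∀ (i : ι) (w : FreeGroup ι), Commute (FreeGroup.of i) w := by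
    intro i w
    induction w using FreeGroup.induction_on with
    | C1 => exact Commute.one_right _
    | of j => rw [Subsingleton.elim i j]
    | inv_of j hj => exact hj.inv_right
    | mul a b ha hb => exact ha.mul_right hb
  induction u using FreeGroup.induction_on with
  | C1 => exact Commute.one_left _
  | of j => exact key j v
  | inv_of j hj => exact hj.inv_left
  | mul a b ha hb => exact ha.mul_left hb

/-- Two distinct free generators would give a map to `ℤ × ℤ` sending them to `(1, 0)` and `(0, 1)`
and killing `g`, which makes both vectors integer multiples of the image of `x`: a contradiction. -/
theorem generators_subsingleton_of_conj_inv {H : Type*} [Group H] [IsFreeGroup H] (x g : H)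
    (hgen : Subgroup.closure {x, g} = ⊤) (h : x * g * x⁻¹ = g⁻¹) :
    Subsingleton (IsFreeGroup.Generators H) := by
  classical
  refine ⟨fun a b => ?_⟩
  by_contra hab
  let f : H →* Multiplicative (ℤ × ℤ) := IsFreeGroup.lift fun i =>
    Multiplicative.ofAdd (if i = a then 1 else 0, if i = b then 1 else 0)
  have hg : f g = 1 := by
    have h1 := congrArg f h
    rw [map_mul, map_mul, map_inv, map_inv, mul_inv_cancel_comm] at h1
    have h2 : (f g).toAdd = -(f g).toAdd := congrArg Multiplicative.toAdd h1
    have h3 : (f g).toAdd = 0 := by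
      have p := congrArg Prod.fst h2
      have q := congrArg Prod.snd h2
      simp only [Prod.fst_neg, Prod.snd_neg] at p q
      ext
      · simp only [Prod.fst_zero]; omega
      · simp only [Prod.snd_zero]; omega
    exact h3
  have hcyc : ∀ w : H, f w ∈ Subgroup.zpowers (f x) := by
    have hle : Subgroup.closure {x, g} ≤ (Subgroup.zpowers (f x)).comap f := by
      rw [Subgroup.closure_le]
      rintro w (rfl | rfl)
      · exact Subgroup.mem_zpowers (f w)
      · simp [hg, one_mem]
    intro w
    exact hle (hgen ▸ Subgroup.mem_top w)
  obtain ⟨n, hn⟩ := hcyc (IsFreeGroup.of a)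
  obtain ⟨m, hm⟩ := hcyc (IsFreeGroup.of b)
  have hn' : n • (f x).toAdd = ((1, 0) : ℤ × ℤ) := by
    have := congrArg Multiplicative.toAdd hn
    simpa [f, hab] using this
  have hm' : m • (f x).toAdd = ((0, 1) : ℤ × ℤ) := by
    have := congrArg Multiplicative.toAdd hm
    simpa [f, Ne.symm hab] using this
  generalize (f x).toAdd = v at hn' hm'
  obtain ⟨p, q⟩ := v
  simp only [Prod.smul_mk, smul_eq_mul, Prod.mk.injEq] at hn' hm'
  obtain ⟨hnp, hnq⟩ := hn'
  obtain ⟨-, hmq⟩ := hm'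
  rcases mul_eq_zero.mp hnq with h0 | h0 <;> simp [h0] at hnp hmq

/-- In a free group, no nontrivial element is conjugate to its inverse. -/
theorem freeGroup_not_conjugate_inverse {α : Type*} (g : FreeGroup α)
    (h : ∃ x : FreeGroup α, x * g * x⁻¹ = g⁻¹) : g = 1 := by
  obtain ⟨x, hx⟩ := h
  let H : Subgroup (FreeGroup α) := Subgroup.closure {x, g}
  let x' : H := ⟨x, Subgroup.subset_closure (by simp)⟩
  let g' : H := ⟨g, Subgroup.subset_closure (by simp)⟩
  have hgen : Subgroup.closure {x', g'} = ⊤ := by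
    apply Subgroup.map_injective H.subtype_injective
    rw [MonoidHom.map_closure, ← MonoidHom.range_eq_map, Subgroup.range_subtype, Set.image_pair]
    rfl
  have hsub := generators_subsingleton_of_conj_inv x' g' hgen (Subtype.ext hx)
  have hcomm : Commute x' g' := by
    have := (freeGroup_commute_of_subsingleton ((IsFreeGroup.mulEquiv H).symm x')
      ((IsFreeGroup.mulEquiv H).symm g')).map (IsFreeGroup.mulEquiv H)
    simpa using this
  have hxg : x * g = g * x := congrArg Subtype.val hcomm.eq
  have hinv : g = g⁻¹ := by rwa [hxg, mul_inv_cancel_right] at hx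
  have hsq : g ^ 2 = 1 := by rw [sq, mul_eq_one_iff_eq_inv]; exact hinv
  exact (pow_eq_one_iff_left two_ne_zero).mp hsq
end

section
/- In a free group, every nontrivial element is a positive power of a unique primitive element: if G is a free group and g ∈ G with g ≠ 1, then there exist a unique primitive element σ ∈ G and a unique integer n ≥ 1 such that g = σ^n. Here σ is primitive if σ = τ^m with τ ∈ G and m ≥ 1 implies m = 1. -/
/-!
Existence: the reduced word of `τ ^ n` is `c ++ w ++ ⋯ ++ w ++ c⁻¹` with `n` copies of the cyclic
reduction `w` of `τ`, and `w` is nonempty when `τ ≠ 1`. So an `n`-th power that is not `1` has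
length at least `n`, and the exponents `n` with `g = τ ^ n` are bounded; a base for the largest
such exponent is primitive.

Uniqueness: it uses only that roots in a free group are unique (`IsMulTorsionFree`). If
`σ ^ n = τ ^ m`, then `τ` conjugates `σ` to another `n`-th root of `σ ^ n`, so `σ` and `τ` commute.
Taking a root of order `gcd n m`, one may assume that `n` and `m` are coprime, and then Bézout gives
a common root `ρ` with `σ = ρ ^ m` and `τ = ρ ^ n`. If `σ` and `τ` are primitive, then `n = m = 1`.
-/

/-- An element `σ` of a group is primitive if whenever `σ = τ ^ m` with `m ≥ 1`,
one has `m = 1`. -/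
def IsPrimitiveElt {G : Type*} [Group G] (σ : G) : Prop :=
  ∀ (τ : G) (m : ℕ), 1 ≤ m → σ = τ ^ m → m = 1

/-- Exponents of roots of a nontrivial element are bounded by its word length. -/
theorem FreeGroup.le_norm_pow {α : Type*} [DecidableEq α] {x : FreeGroup α} (hx : x ≠ 1) (n : ℕ) :
    n ≤ (x ^ n).norm := by
  rcases Nat.eq_zero_or_pos n with rfl | hn
  · simp
  have hw : reduceCyclically x.toWord ≠ [] := by
    intro h
    have hc := congr_arg mk (reduceCyclically.conj_conjugator_reduceCyclically x.toWord)
    rw [h, List.append_nil, ← mul_mk, ← inv_mk, mul_inv_cancel, mk_toWord] at hc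
    exact hx hc.symm
  have hpos := List.length_pos_of_ne_nil hw
  have hlen : n ≤ n * (reduceCyclically x.toWord).length := Nat.le_mul_of_pos_right n hpos
  rw [norm, toWord_pow, reduceCyclically.reduce_flatten_replicate isReduced_toWord]
  simp [hn.ne']
  omega

theorem commute_of_pow_eq_pow {G : Type*} [Group G] [IsMulTorsionFree G] {σ τ : G} {n m : ℕ}
    (hn : n ≠ 0) (h : σ ^ n = τ ^ m) : Commute σ τ := by
  have hconj : (τ * σ * τ⁻¹) ^ n = σ ^ n := by
    rw [conj_pow, h, ← pow_succ', pow_succ, mul_inv_cancel_right]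
  have hroot := pow_left_injective hn hconj
  exact (mul_inv_eq_iff_eq_mul.mp hroot).symm

theorem exists_common_root_of_coprime {G : Type*} [Group G] {σ τ : G} {a b : ℕ}
    (hc : Commute σ τ) (hab : a.Coprime b) (h : σ ^ a = τ ^ b) :
    ∃ ρ : G, σ = ρ ^ b ∧ τ = ρ ^ a := by
  have hbez : (a : ℤ) * a.gcdA b + b * a.gcdB b = 1 := by
    rw [← Nat.gcd_eq_gcd_ab, hab.gcd_eq_one, Nat.cast_one]
  have hz : σ ^ (a : ℤ) = τ ^ (b : ℤ) := by simpa using h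
  refine ⟨σ ^ a.gcdB b * τ ^ a.gcdA b, ?_, ?_⟩
  · rw [((hc.zpow_zpow _ _).mul_pow b), ← zpow_natCast, ← zpow_natCast, ← zpow_mul, ← zpow_mul,
      mul_comm (a.gcdA b), zpow_mul τ, ← hz, ← zpow_mul, ← zpow_add]
    rw [mul_comm (a.gcdB b), add_comm, hbez, zpow_one]
  · rw [((hc.zpow_zpow _ _).mul_pow a), ← zpow_natCast, ← zpow_natCast, ← zpow_mul, ← zpow_mul,
      mul_comm (a.gcdB b), zpow_mul σ, hz, ← zpow_mul, ← zpow_add]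
    rw [mul_comm (a.gcdA b), add_comm, hbez, zpow_one]

theorem IsPrimitiveElt.eq_of_pow_eq_pow {G : Type*} [Group G] [IsMulTorsionFree G] {σ τ : G}
    {n m : ℕ} (hσ : IsPrimitiveElt σ) (hτ : IsPrimitiveElt τ) (hn : 1 ≤ n) (hm : 1 ≤ m)
    (h : σ ^ n = τ ^ m) : σ = τ ∧ n = m := by
  have hc := commute_of_pow_eq_pow (by omega) h
  obtain ⟨d, a, b, hd, hab, rfl, rfl⟩ := Nat.exists_coprime' (Nat.gcd_pos_of_pos_left m hn)
  have h' : σ ^ a = τ ^ b := by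
    rw [pow_mul, pow_mul] at h
    exact pow_left_injective hd.ne' h
  obtain ⟨ρ, hσρ, hτρ⟩ := exists_common_root_of_coprime hc hab h'
  have hb := hσ ρ b (Nat.pos_of_mul_pos_right hm) hσρ
  have ha := hτ ρ a (Nat.pos_of_mul_pos_right hn) hτρ
  subst ha hb
  exact ⟨hσρ.trans hτρ.symm, rfl⟩

/-- In a free group, every nontrivial element is a positive power of a unique
primitive element, with a unique exponent. -/
theorem freeGroup_exists_unique_primitive_power {α : Type*} (g : FreeGroup α) (hg : g ≠ 1) :
    ∃! sn : FreeGroup α × ℕ, IsPrimitiveElt sn.1 ∧ 1 ≤ sn.2 ∧ g = sn.1 ^ sn.2 := by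
  classical
  have hbound : ∀ (τ : FreeGroup α) (n : ℕ), g = τ ^ n → n ≤ g.norm := by
    rintro τ n rfl
    exact FreeGroup.le_norm_pow (fun h => hg (by rw [h, one_pow])) n
  let P : ℕ → Prop := fun n => ∃ τ : FreeGroup α, g = τ ^ n
  have hone : P 1 := ⟨g, (pow_one g).symm⟩
  have hle : 1 ≤ g.norm := hbound g 1 (pow_one g).symm
  have hN : 1 ≤ Nat.findGreatest P g.norm := Nat.le_findGreatest hle hone
  obtain ⟨σ, hσ⟩ : P (Nat.findGreatest P g.norm) := Nat.findGreatest_spec hle hone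
  have hprim : IsPrimitiveElt σ := by
    intro τ m hm hτ
    have hg' : g = τ ^ (m * Nat.findGreatest P g.norm) := by rw [pow_mul, ← hτ, ← hσ]
    -- The exponent `m * N` is again admissible, so it cannot exceed the maximum `N`.
    have hmax : m * Nat.findGreatest P g.norm ≤ Nat.findGreatest P g.norm :=
      Nat.le_findGreatest (hbound τ _ hg') ⟨τ, hg'⟩
    have : m ≤ 1 := Nat.le_of_mul_le_mul_right (by simpa using hmax) hN
    omega
  refine ⟨(σ, Nat.findGreatest P g.norm), ⟨hprim, hN, hσ⟩, ?_⟩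
  rintro ⟨τ, m⟩ ⟨hτ, hm, hgτ⟩
  obtain ⟨h₁, h₂⟩ := hτ.eq_of_pow_eq_pow hprim hm hN (hgτ.symm.trans hσ)
  exact Prod.ext h₁ h₂
end
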